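/- Suppose that for every ŷ ∈ 𝒴 the value h(ŷ) lies in the range of f (i.e., h(𝒴) ⊆ f(𝒳)). Then for every distortion level D > 0, the minimal achievable rate for model splitting equals the minimal achievable rate for full-input compression: R_X(D;T) = R_Y(D;T). -/

import Mathlib

open scoped BigOperators

/-- Joint distribution P(a,b) = p(a)·k(a)(b) induced by a source `p` and a channel `k`,
as a real number. -/
noncomputable def jointP {A B : Type*} [Fintype A] [Fintype B] (p : PMF A) (k : A → PMF B)
    (a : A) (b : B) : ℝ :=
  (p a * k a b).toReal

/-- Marginal distribution of the second coordinate of the joint induced by `(p, k)`. -/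
noncomputable def margSnd {A B : Type*} [Fintype A] [Fintype B] (p : PMF A) (k : A → PMF B)
    (b : B) : ℝ :=
  ∑ a, jointP p k a b

/-- Mutual information I(A;B) = ∑_{a,b} P(a,b)·log(P(a,b)/(P(a)·P(b))) of the joint
induced by `(p, k)`; the convention 0·log 0 = 0 holds automatically in Lean. -/
noncomputable def mutualInfo {A B : Type*} [Fintype A] [Fintype B] (p : PMF A)
    (k : A → PMF B) : ℝ :=
  ∑ a, ∑ b, jointP p k a b * Real.log (jointP p k a b / ((p a).toReal * margSnd p k b))

/-- Expected distortion E[d(A,B)] under the joint induced by `(p, k)`. -/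
noncomputable def expDist {A B : Type*} [Fintype A] [Fintype B] (p : PMF A) (k : A → PMF B)
    (d : A → B → ℝ) : ℝ :=
  ∑ a, ∑ b, jointP p k a b * d a b

/-- Rate-distortion function: infimum of mutual information over all channels `A → PMF B`
meeting the expected-distortion constraint `≤ D`. -/
noncomputable def rate {A B : Type*} [Fintype A] [Fintype B] (p : PMF A) (d : A → B → ℝ)
    (D : ℝ) : ℝ :=
  sInf { r : ℝ | ∃ k : A → PMF B, expDist p k d ≤ D ∧ r = mutualInfo p k }

/-- Conditional probability P(A = a | B = b) under the joint induced by `(p, k)`. -/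
noncomputable def condProb {A B : Type*} [Fintype A] [Fintype B] (p : PMF A) (k : A → PMF B)
    (a : A) (b : B) : ℝ :=
  jointP p k a b / margSnd p k b

open Finset in
/-- Log-sum inequality: coarse-graining along `φ` does not increase divergence. -/
theorem sum_mul_log_div_fiberwise_le {I J : Type*} [Fintype I] [Fintype J] [DecidableEq J]
    (φ : I → J) (w v : I → ℝ) (hw : ∀ i, 0 ≤ w i) (hv : ∀ i, 0 ≤ v i)
    (hwv : ∀ i, v i = 0 → w i = 0) (W V : J → ℝ)
    (hW : ∀ j, W j = ∑ i with φ i = j, w i) (hV : ∀ j, V j = ∑ i with φ i = j, v i) :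
    ∑ j, W j * Real.log (W j / V j) ≤ ∑ i, w i * Real.log (w i / v i) := by
  have hW0 : ∀ j, 0 ≤ W j := fun j => by rw [hW]; exact sum_nonneg fun i _ => hw i
  have hpush : ∀ (u : I → ℝ) (U c : J → ℝ), (∀ j, U j = ∑ i with φ i = j, u i) →
      ∑ j, U j * c j = ∑ i, u i * c (φ i) := by
    intro u U c hU
    rw [← sum_fiberwise univ φ]
    refine sum_congr rfl fun j _ => ?_
    rw [hU, sum_mul]
    exact sum_congr rfl fun i hi => by rw [(mem_filter.1 hi).2]
  have hpt : ∀ i, w i * Real.log (W (φ i) / V (φ i)) + (w i - v i * (W (φ i) / V (φ i)))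
      ≤ w i * Real.log (w i / v i) := by
    intro i
    rcases (hw i).eq_or_lt with h0 | hpos
    · have hV0 : 0 ≤ V (φ i) := by rw [hV]; exact sum_nonneg fun i _ => hv i
      have := mul_nonneg (hv i) (div_nonneg (hW0 (φ i)) hV0)
      rw [← h0]; linarith
    · have hvpos : 0 < v i := (hv i).lt_of_ne fun h => hpos.ne' (hwv i h.symm)
      have hmem : i ∈ univ.filter (φ · = φ i) := by simp
      have hWpos : 0 < W (φ i) := by
        rw [hW]; exact hpos.trans_le (single_le_sum (fun i _ => hw i) hmem)
      have hVpos : 0 < V (φ i) := by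
        rw [hV]; exact hvpos.trans_le (single_le_sum (fun i _ => hv i) hmem)
      have hr : 0 < W (φ i) / V (φ i) := div_pos hWpos hVpos
      have hs : 0 < w i / v i := div_pos hpos hvpos
      have hlog := Real.log_le_sub_one_of_pos (div_pos hr hs)
      rw [Real.log_div hr.ne' hs.ne'] at hlog
      have hmul := mul_le_mul_of_nonneg_left hlog hpos.le
      have heq : w i * (W (φ i) / V (φ i) / (w i / v i) - 1)
          = v i * (W (φ i) / V (φ i)) - w i := by
        field_simp
      linarith
  have hsum := sum_le_sum fun i (_ : i ∈ univ) => hpt i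
  rw [sum_add_distrib, sum_sub_distrib, ← hpush w W (fun j => Real.log (W j / V j)) hW,
    ← hpush v V (fun j => W j / V j) hV] at hsum
  have hmass : ∑ j, V j * (W j / V j) ≤ ∑ i, w i := by
    have h1 := hpush w W (fun _ => 1) hW
    simp only [mul_one] at h1
    rw [← h1]
    refine sum_le_sum fun j _ => ?_
    rcases eq_or_ne (V j) 0 with h | h
    · simpa [h] using hW0 j
    · rw [mul_div_cancel₀ _ h]
  linarith

section Channel

variable {A B A' B' : Type*} [Fintype A] [Fintype B] [Fintype A'] [Fintype B']

theorem jointP_nonneg (p : PMF A) (k : A → PMF B) (a : A) (b : B) : 0 ≤ jointP p k a b :=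
  ENNReal.toReal_nonneg

theorem margSnd_nonneg (p : PMF A) (k : A → PMF B) (b : B) : 0 ≤ margSnd p k b :=
  Finset.sum_nonneg fun _ _ => jointP_nonneg ..

theorem sum_toReal_eq_one (q : PMF B) : ∑ b, (q b).toReal = 1 := by
  rw [← ENNReal.toReal_sum fun b _ => q.apply_ne_top b, ← tsum_fintype (L := .unconditional B),
    q.tsum_coe, ENNReal.toReal_one]

theorem sum_jointP_right (p : PMF A) (k : A → PMF B) (a : A) :
    ∑ b, jointP p k a b = (p a).toReal := by
  simp only [jointP, ENNReal.toReal_mul]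
  rw [← Finset.mul_sum, sum_toReal_eq_one, mul_one]

theorem jointP_eq_zero_of_mul_eq_zero (p : PMF A) (k : A → PMF B) (a : A) (b : B)
    (h : (p a).toReal * margSnd p k b = 0) : jointP p k a b = 0 := by
  rcases mul_eq_zero.1 h with h | h
  · simp [jointP, ENNReal.toReal_mul, h]
  · exact (Finset.sum_eq_zero_iff_of_nonneg fun _ _ => jointP_nonneg ..).1 h a
      (Finset.mem_univ a)

/-- The joint law of `(p', k')` is the image of the joint law of `(p, k)` under `(g, s)`. -/
def IsJointImage [DecidableEq A'] [DecidableEq B'] (p : PMF A) (k : A → PMF B) (g : A → A')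
    (s : B → B') (p' : PMF A') (k' : A' → PMF B') : Prop :=
  ∀ a' b', jointP p' k' a' b' = ∑ a with g a = a', ∑ b with s b = b', jointP p k a b

namespace IsJointImage

variable [DecidableEq A'] [DecidableEq B'] {p : PMF A} {k : A → PMF B} {g : A → A'} {s : B → B'}
  {p' : PMF A'} {k' : A' → PMF B'}

theorem fst (H : IsJointImage p k g s p' k') (a' : A') :
    (p' a').toReal = ∑ a with g a = a', (p a).toReal := by
  rw [← sum_jointP_right p' k']
  simp only [H a']
  rw [Finset.sum_comm]
  refine Finset.sum_congr rfl fun a _ => ?_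
  rw [Finset.sum_fiberwise, sum_jointP_right]

theorem snd (H : IsJointImage p k g s p' k') (b' : B') :
    margSnd p' k' b' = ∑ b with s b = b', margSnd p k b := by
  simp only [margSnd, H _ b']
  rw [Finset.sum_fiberwise, Finset.sum_comm]

theorem expDist_eq (H : IsJointImage p k g s p' k') (d : A' → B' → ℝ) :
    expDist p' k' d = expDist p k fun a b => d (g a) (s b) := by
  simp only [expDist]
  rw [← Finset.sum_fiberwise Finset.univ g]
  refine Finset.sum_congr rfl fun a' _ => ?_
  rw [← Finset.sum_congr rfl fun a _ => Finset.sum_fiberwise Finset.univ s _, Finset.sum_comm]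
  refine Finset.sum_congr rfl fun b' _ => ?_
  rw [H, Finset.sum_mul]
  refine Finset.sum_congr rfl fun a ha => ?_
  rw [Finset.sum_mul]
  refine Finset.sum_congr rfl fun b hb => ?_
  rw [(Finset.mem_filter.1 ha).2, (Finset.mem_filter.1 hb).2]

/-- Data processing inequality. -/
theorem mutualInfo_le (H : IsJointImage p k g s p' k') : mutualInfo p' k' ≤ mutualInfo p k := by
  have hfilter : ∀ z : A' × B', (Finset.univ.filter fun i : A × B => Prod.map g s i = z)
      = (Finset.univ.filter (g · = z.1)) ×ˢ (Finset.univ.filter (s · = z.2)) := by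
    intro z; ext i; simp [Prod.ext_iff]
  have key := sum_mul_log_div_fiberwise_le (Prod.map g s)
    (fun i => jointP p k i.1 i.2) (fun i => (p i.1).toReal * margSnd p k i.2)
    (fun i => jointP_nonneg ..)
    (fun i => mul_nonneg ENNReal.toReal_nonneg (margSnd_nonneg ..))
    (fun i => jointP_eq_zero_of_mul_eq_zero p k i.1 i.2)
    (fun j => jointP p' k' j.1 j.2) (fun j => (p' j.1).toReal * margSnd p' k' j.2)
    (fun j => by rw [hfilter, Finset.sum_product, H])
    (fun j => by rw [hfilter, Finset.sum_product, H.fst, H.snd, Finset.sum_mul_sum])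
  simpa only [mutualInfo, Fintype.sum_prod_type] using key

end IsJointImage

theorem exists_isJointImage [DecidableEq A'] [DecidableEq B'] [Nonempty B'] (p : PMF A)
    (k : A → PMF B) (g : A → A') (s : B → B') :
    ∃ k', IsJointImage p k g s (p.map g) k' := by
  have hmap : ∀ a', (p.map g) a' = ∑ a, (g ⁻¹' {a'}).indicator p a := by
    intro a'
    rw [PMF.map_apply, tsum_fintype]
    refine Finset.sum_congr rfl fun a _ => ?_
    simp [Set.indicator, eq_comm]
  have hex : ∀ a', ∃ q : PMF B', ∀ b',
      (p.map g) a' * q b' = ∑ a with g a = a', ∑ b with s b = b', p a * k a b := by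
    intro a'
    by_cases h0 : ∃ a ∈ g ⁻¹' {a'}, a ∈ p.support
    · refine ⟨(p.filter _ h0).bind fun a => (k a).map s, fun b' => ?_⟩
      have hne : (p.map g) a' ≠ 0 := by
        obtain ⟨a, ha, hp⟩ := h0
        rw [← PMF.mem_support_iff, PMF.mem_support_map_iff]
        exact ⟨a, hp, ha⟩
      rw [PMF.bind_apply, tsum_fintype, Finset.mul_sum, Finset.sum_filter]
      refine Finset.sum_congr rfl fun a _ => ?_
      rw [PMF.filter_apply, tsum_fintype, ← hmap, PMF.map_apply s, tsum_fintype]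
      by_cases ha : g a = a'
      · rw [if_pos ha, Set.indicator_of_mem (by exact ha), ← Finset.mul_sum, Finset.sum_filter,
          mul_comm (p a), ← mul_assoc, ← mul_assoc,
          ENNReal.mul_inv_cancel hne ((p.map g).apply_ne_top a'), one_mul]
        congr! 3
        exact eq_comm
      · rw [if_neg ha, Set.indicator_of_notMem (by exact ha)]
        simp
    · refine ⟨PMF.pure (Classical.arbitrary B'), fun b' => ?_⟩
      have hz : ∀ a, g a = a' → p a = 0 := by
        intro a ha
        by_contra hp
        exact h0 ⟨a, ha, (p.mem_support_iff a).2 hp⟩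
      rw [hmap, Finset.sum_eq_zero, zero_mul, Finset.sum_eq_zero]
      · intro a ha
        simp [hz a (Finset.mem_filter.1 ha).2]
      · intro a _
        exact Set.indicator_apply_eq_zero.2 fun ha => hz a ha
  choose k' hk' using hex
  refine ⟨k', fun a' b' => ?_⟩
  have hfin : ∀ a b, p a * k a b ≠ ⊤ := fun a b =>
    ENNReal.mul_ne_top (p.apply_ne_top a) ((k a).apply_ne_top b)
  simp only [jointP]
  rw [hk', ENNReal.toReal_sum fun a _ => ENNReal.sum_ne_top.2 fun b _ => hfin a b]
  exact Finset.sum_congr rfl fun a _ => ENNReal.toReal_sum fun b _ => hfin a b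

theorem mutualInfo_nonneg (p : PMF A) (k : A → PMF B) : 0 ≤ mutualInfo p k := by
  obtain ⟨k', H⟩ := exists_isJointImage p k (fun _ => ()) (fun _ => ())
  refine le_of_eq_of_le ?_ H.mutualInfo_le
  have hone : ∀ q : PMF Unit, q () = 1 := fun q => by
    simpa using q.tsum_coe
  simp [mutualInfo, margSnd, jointP, hone]

theorem sum_map_toReal_mul (p : PMF A) (g : A → A') (c : A' → ℝ) :
    ∑ a', ((p.map g) a').toReal * c a' = ∑ a, (p a).toReal * c (g a) := by
  classical
  have hmap : ∀ a', ((p.map g) a').toReal = ∑ a with g a = a', (p a).toReal := by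
    intro a'
    rw [PMF.map_apply, tsum_fintype, ← Finset.sum_filter,
      ENNReal.toReal_sum fun a _ => p.apply_ne_top a]
    simp only [eq_comm]
  rw [← Finset.sum_fiberwise Finset.univ g]
  refine Finset.sum_congr rfl fun a' _ => ?_
  rw [hmap, Finset.sum_mul]
  exact Finset.sum_congr rfl fun a ha => by rw [(Finset.mem_filter.1 ha).2]

theorem expDist_comp (p : PMF A) (g : A → A') (k : A' → PMF B) (d : A' → B → ℝ) :
    expDist p (fun a => k (g a)) (fun a b => d (g a) b) = expDist (p.map g) k d := by
  simp only [expDist, jointP, ENNReal.toReal_mul, mul_assoc, ← Finset.mul_sum]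
  exact (sum_map_toReal_mul p g fun a' => ∑ b, (k a' b).toReal * d a' b).symm

theorem mutualInfo_eq_sum (p : PMF A) (k : A → PMF B) :
    mutualInfo p k
      = ∑ a, (p a).toReal * ∑ b, (k a b).toReal * Real.log ((k a b).toReal / margSnd p k b) := by
  simp only [mutualInfo, Finset.mul_sum]
  refine Finset.sum_congr rfl fun a _ => Finset.sum_congr rfl fun b _ => ?_
  rw [jointP, ENNReal.toReal_mul]
  rcases eq_or_ne (p a).toReal 0 with h | h
  · simp [h]
  · rw [mul_div_mul_left _ _ h, mul_assoc]

/-- If the channel only looks at `g a`, then `g a` carries all the information. -/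
theorem mutualInfo_comp (p : PMF A) (g : A → A') (k : A' → PMF B) :
    mutualInfo p (fun a => k (g a)) = mutualInfo (p.map g) k := by
  have hmarg : margSnd p (fun a => k (g a)) = margSnd (p.map g) k := by
    ext b
    simp only [margSnd, jointP, ENNReal.toReal_mul]
    exact (sum_map_toReal_mul p g fun a' => (k a' b).toReal).symm
  rw [mutualInfo_eq_sum, mutualInfo_eq_sum, hmarg]
  exact (sum_map_toReal_mul p g fun a' =>
    ∑ b, (k a' b).toReal * Real.log ((k a' b).toReal / margSnd (p.map g) k b)).symm

/-- Two rates agree if every admissible channel of either problem is matched by an admissible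
channel of the other one with no larger mutual information. -/
theorem rate_eq_of_dominated {p : PMF A} {d : A → B → ℝ} {p' : PMF A'} {d' : A' → B' → ℝ} {D : ℝ}
    (h : ∀ k, expDist p k d ≤ D →
      ∃ k', expDist p' k' d' ≤ D ∧ mutualInfo p' k' ≤ mutualInfo p k)
    (h' : ∀ k', expDist p' k' d' ≤ D →
      ∃ k, expDist p k d ≤ D ∧ mutualInfo p k ≤ mutualInfo p' k') :
    rate p d D = rate p' d' D := by
  by_cases hne : ∃ k, expDist p k d ≤ D
  · obtain ⟨k₀, hk₀⟩ := hne
    obtain ⟨k₁, hk₁, -⟩ := h k₀ hk₀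
    apply le_antisymm
    · refine le_csInf ⟨_, k₁, hk₁, rfl⟩ ?_
      rintro _ ⟨k', hk', rfl⟩
      obtain ⟨k, hk, hle⟩ := h' k' hk'
      refine le_trans (csInf_le ⟨0, ?_⟩ ⟨k, hk, rfl⟩) hle
      rintro _ ⟨k, -, rfl⟩
      exact mutualInfo_nonneg p k
    · refine le_csInf ⟨_, k₀, hk₀, rfl⟩ ?_
      rintro _ ⟨k, hk, rfl⟩
      obtain ⟨k', hk', hle⟩ := h k hk
      refine le_trans (csInf_le ⟨0, ?_⟩ ⟨k', hk', rfl⟩) hle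
      rintro _ ⟨k', -, rfl⟩
      exact mutualInfo_nonneg p' k'
  · have hne' : ¬ ∃ k', expDist p' k' d' ≤ D := fun ⟨k', hk'⟩ =>
      hne ((h' k' hk').imp fun _ => And.left)
    rw [rate, rate]
    congr 1
    ext r
    exact ⟨fun ⟨k, hk, _⟩ => (hne ⟨k, hk⟩).elim, fun ⟨k, hk, _⟩ => (hne' ⟨k, hk⟩).elim⟩

end Channel

/-- If h(𝒴) ⊆ f(𝒳) (with f = h ∘ g), then for every D > 0,
R_X(D;T) = R_Y(D;T). -/
theorem full_eq_split_of_range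
    {𝒳 𝒴 𝒯 : Type*} [Fintype 𝒳] [Fintype 𝒴] [Fintype 𝒯]
    [Nonempty 𝒳] [Nonempty 𝒴] [Nonempty 𝒯]
    (pX : PMF 𝒳) (g : 𝒳 → 𝒴) (h : 𝒴 → 𝒯)
    (dT : 𝒯 → 𝒯 → ℝ) (hdT : ∀ t t', 0 ≤ dT t t')
    (hrange : ∀ yhat : 𝒴, h yhat ∈ Set.range (fun x => h (g x)))
    (D : ℝ) (hD : 0 < D) :
    rate pX (fun x xhat => dT (h (g x)) (h (g xhat))) D
      = rate (pX.map g) (fun y yhat => dT (h y) (h yhat)) D := by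
  classical
  apply rate_eq_of_dominated
  · intro k hk
    obtain ⟨k', H⟩ := exists_isJointImage pX k g g
    exact ⟨k', (H.expDist_eq _).trans_le hk, H.mutualInfo_le⟩
  · intro k hk
    choose s hs using hrange
    obtain ⟨k', H⟩ := exists_isJointImage pX (fun x => k (g x)) id s
    rw [PMF.map_id] at H
    refine ⟨k', ?_, H.mutualInfo_le.trans_eq (mutualInfo_comp pX g k)⟩
    rw [H.expDist_eq]
    simp only [id, hs]
    exact (expDist_comp pX g k fun y yhat => dT (h y) (h yhat)).trans_le hk
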